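/- arXiv:2105.10458 — 4 statements merged into one kernel-verified Lean document; each statement's English description precedes it below -/
import Mathlib

section
/- Let L ⊂ R^d be a full-rank lattice and X a positive basis for L. Then, as t → ∞, the number of points of L⁺ \ S(X) of Euclidean norm at most t equals (ω_d(1 − ν(X)·2^d)/(2^d det L))·t^d + O(t^{d−1}), where ν(X) is the solid-angle measure of the cone C(X) and ω_d is the volume of the unit ball in R^d. -/
open MeasureTheory Filter Asymptotics
open scoped Pointwise

lemma gaps_vol_scale (d : ℕ) (C : Set (Fin d → ℝ)) (hsm : ∀ t : ℝ, 0 < t → ∀ y ∈ C, t • y ∈ C)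
    (t : ℝ) (ht : 0 < t) :
    volume (C ∩ {y | ‖WithLp.toLp 2 y‖ ≤ t}) =
      ENNReal.ofReal (t ^ d) * volume (C ∩ {y | ‖WithLp.toLp 2 y‖ ≤ 1}) := by
  have h : C ∩ {y | ‖WithLp.toLp 2 y‖ ≤ t} = t • (C ∩ {y | ‖WithLp.toLp 2 y‖ ≤ 1}) := by
    ext y
    rw [Set.mem_smul_set_iff_inv_smul_mem₀ ht.ne']
    simp only [Set.mem_inter_iff, Set.mem_ofPred_eq, WithLp.toLp_smul, norm_smul, norm_inv,
      Real.norm_eq_abs, abs_of_pos ht]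
    rw [inv_mul_le_iff₀ ht, mul_one]
    refine and_congr_left fun _ => ⟨fun hy => hsm _ (inv_pos.2 ht) _ hy, fun hy => ?_⟩
    have := hsm t ht _ hy
    rwa [smul_inv_smul₀ ht.ne'] at this
  rw [h, Measure.addHaar_smul]
  simp [abs_of_pos ht]

lemma gaps_vol_fin (d : ℕ) (C : Set (Fin d → ℝ)) (t : ℝ) :
    volume (C ∩ {y | ‖WithLp.toLp 2 y‖ ≤ t}) ≠ ⊤ := by
  have hb : Bornology.IsBounded {y : Fin d → ℝ | ‖WithLp.toLp 2 y‖ ≤ t} := by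
    rw [isBounded_iff_forall_norm_le]
    refine ⟨max t 0, fun y hy => ?_⟩
    rw [pi_norm_le_iff_of_nonneg (le_max_right _ _)]
    intro i
    exact ((PiLp.norm_apply_le (WithLp.toLp 2 y) i).trans hy).trans (le_max_left _ _)
  exact (hb.subset Set.inter_subset_right).measure_lt_top.ne

lemma gaps_count (d : ℕ) (b : Module.Basis (Fin d) ℝ (Fin d → ℝ)) (C : Set (Fin d → ℝ))
    (hsm : ∀ t : ℝ, 0 < t → ∀ y ∈ C, t • y ∈ C)
    (hadd : ∀ y ∈ C, ∀ q ∈ ZSpan.fundamentalDomain b, y + q ∈ C) :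
    ∃ M : ℝ, ∀ᶠ t : ℝ in atTop,
      {y : Fin d → ℝ | y ∈ Submodule.span ℤ (Set.range b) ∧ y ∈ C ∧
        ‖WithLp.toLp 2 y‖ ≤ t}.Finite ∧
      |({y : Fin d → ℝ | y ∈ Submodule.span ℤ (Set.range b) ∧ y ∈ C ∧
        ‖WithLp.toLp 2 y‖ ≤ t}.ncard : ℝ) * (volume (ZSpan.fundamentalDomain b)).toReal -
        (volume (C ∩ {y | ‖WithLp.toLp 2 y‖ ≤ 1})).toReal * t ^ d| ≤ M * t ^ (d - 1) := by
  set P := ZSpan.fundamentalDomain b with hP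
  set V := (volume (C ∩ {y | ‖WithLp.toLp 2 y‖ ≤ 1})).toReal with hV
  have hPfin : volume P ≠ ⊤ := (ZSpan.fundamentalDomain_isBounded b).measure_lt_top.ne
  -- bound on P
  obtain ⟨c, hc0, hc⟩ : ∃ c : ℝ, 0 < c ∧ ∀ q ∈ P, ‖WithLp.toLp 2 q‖ ≤ c := by
    refine ⟨∑ i, ‖WithLp.toLp 2 (b i)‖ + 1, by positivity, fun q hq => ?_⟩
    have h1 : q = ∑ i, b.repr q i • b i := (b.sum_repr q).symm
    rw [h1, WithLp.toLp_sum]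
    refine (norm_sum_le _ _).trans ((Finset.sum_le_sum fun i _ => ?_).trans
      (le_add_of_nonneg_right zero_le_one))
    have := (ZSpan.mem_fundamentalDomain b).1 hq i
    rw [WithLp.toLp_smul, norm_smul, Real.norm_eq_abs, abs_of_nonneg this.1]
    exact mul_le_of_le_one_left (norm_nonneg _) this.2.le
  refine ⟨V * (c * d * 2 ^ (d - 1)), ?_⟩
  filter_upwards [eventually_gt_atTop c] with t ht
  have ht0 : 0 < t := hc0.trans ht
  set A := {y : Fin d → ℝ | y ∈ Submodule.span ℤ (Set.range b) ∧ y ∈ C ∧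
        ‖WithLp.toLp 2 y‖ ≤ t} with hA
  have hbd : Bornology.IsBounded {y : Fin d → ℝ | ‖WithLp.toLp 2 y‖ ≤ t} := by
    rw [isBounded_iff_forall_norm_le]
    refine ⟨t, fun y hy => ?_⟩
    rw [pi_norm_le_iff_of_nonneg ht0.le]
    intro i
    exact (PiLp.norm_apply_le (WithLp.toLp 2 y) i).trans hy
  have hfin : A.Finite := by
    refine (ZSpan.setFinite_inter b hbd).subset ?_
    intro y hy
    exact ⟨hy.2.2, hy.1⟩
  refine ⟨hfin, ?_⟩
  have hV0 : 0 ≤ V := ENNReal.toReal_nonneg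
  have hscale : ∀ s : ℝ, 0 < s → (volume (C ∩ {y | ‖WithLp.toLp 2 y‖ ≤ s})).toReal = s ^ d * V := by
    intro s hs
    rw [gaps_vol_scale d C hsm s hs, ENNReal.toReal_mul, ENNReal.toReal_ofReal (by positivity)]
  have hncard : (A.ncard : ℝ) = (hfin.toFinset.card : ℝ) := by
    rw [Set.ncard_eq_toFinset_card A hfin]
  -- upper bound
  have hup : (A.ncard : ℝ) * (volume P).toReal ≤ (t + c) ^ d * V := by
    rw [← hscale (t + c) (by positivity), hncard]
    have hu : volume (⋃ y ∈ hfin.toFinset, (fun p => y + p) '' P) =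
        hfin.toFinset.card * volume P := by
      rw [measure_biUnion_finset]
      · simp [Set.image_add_left, measure_preimage_add]
      · intro y hy z hz hyz
        rw [Function.onFun, Set.disjoint_left]
        rintro _ ⟨p, hp, rfl⟩ ⟨q, hq, hpq⟩
        apply hyz
        simp only [Finset.mem_coe, Set.Finite.mem_toFinset] at hy hz
        have e1 := ZSpan.fract_zSpan_add b p hy.1
        have e2 := ZSpan.fract_zSpan_add b q hz.1
        rw [ZSpan.fract_eq_self.2 hp] at e1
        rw [ZSpan.fract_eq_self.2 hq] at e2
        simp only at hpq
        rw [hpq, e1] at e2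
        rw [e2] at hpq
        exact (add_right_cancel hpq).symm
      · intro y _
        have := (ZSpan.fundamentalDomain_measurableSet b)
        exact (measurableEmbedding_addLeft y).measurableSet_image.2 this
    rw [← ENNReal.toReal_natCast, ← ENNReal.toReal_mul, ← hu]
    refine ENNReal.toReal_mono (gaps_vol_fin d C _) (measure_mono ?_)
    intro z hz
    simp only [Set.mem_iUnion, Set.Finite.mem_toFinset] at hz
    obtain ⟨y, hy, p, hp, rfl⟩ := hz
    refine ⟨hadd y hy.2.1 p hp, ?_⟩
    simp only [Set.mem_ofPred_eq, WithLp.toLp_add]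
    exact (norm_add_le _ _).trans (add_le_add hy.2.2 (hc p hp))
  have hlo : (t - c) ^ d * V ≤ (A.ncard : ℝ) * (volume P).toReal := by
    rw [← hscale (t - c) (by linarith), hncard]
    have hu : volume (⋃ y ∈ hfin.toFinset, (fun p => y - p) '' P) ≤
        hfin.toFinset.card * volume P := by
      refine (measure_biUnion_finset_le _ _).trans ?_
      have : ∀ y : Fin d → ℝ, volume ((fun p => y - p) '' P) = volume P := by
        intro y
        have : (fun p => y - p) '' P = (fun p => y - p) ⁻¹' P := by
          ext z
          constructor
          · rintro ⟨p, hp, rfl⟩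
            simpa using hp
          · intro hz
            exact ⟨y - z, hz, by simp⟩
        rw [this]
        exact (Measure.measurePreserving_sub_left volume y).measure_preimage
          (ZSpan.fundamentalDomain_measurableSet b).nullMeasurableSet
      simp [this]
    rw [← ENNReal.toReal_natCast, ← ENNReal.toReal_mul]
    refine ENNReal.toReal_mono (ENNReal.mul_ne_top (by simp) hPfin) ((measure_mono ?_).trans hu)
    rintro y ⟨hyC, hy⟩
    simp only [Set.mem_ofPred_eq] at hy
    -- representative
    have hq : ZSpan.fract b (-y) ∈ P := ZSpan.fract_mem_fundamentalDomain b _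
    simp only [Set.mem_iUnion, Set.Finite.mem_toFinset]
    refine ⟨y + ZSpan.fract b (-y), ⟨?_, hadd y hyC _ hq, ?_⟩, ZSpan.fract b (-y), hq, by simp⟩
    · rw [ZSpan.fract_apply]
      have : y + (-y - (ZSpan.floor b (-y) : Fin d → ℝ)) = -(ZSpan.floor b (-y) : Fin d → ℝ) := by
        abel
      rw [this]
      exact neg_mem (ZSpan.floor b (-y)).2
    · rw [WithLp.toLp_add]
      have := (norm_add_le (WithLp.toLp 2 y) (WithLp.toLp 2 (ZSpan.fract b (-y)))).trans
        (add_le_add hy (hc _ hq))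
      linarith
  have h1 : |(t + c) ^ d - t ^ d| ≤ c * d * 2 ^ (d - 1) * t ^ (d - 1) := by
    refine (abs_pow_sub_pow_le _ _ _).trans ?_
    rw [abs_of_pos (by linarith : 0 < t + c), abs_of_pos ht0, max_eq_left (by linarith),
      add_sub_cancel_left, abs_of_pos hc0, mul_assoc (c * d), ← mul_pow]
    gcongr
    linarith
  have h2 : |t ^ d - (t - c) ^ d| ≤ c * d * 2 ^ (d - 1) * t ^ (d - 1) := by
    refine (abs_pow_sub_pow_le _ _ _).trans ?_
    rw [abs_of_pos (by linarith : 0 < t - c), abs_of_pos ht0, max_eq_left (by linarith),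
      sub_sub_cancel, abs_of_pos hc0, mul_assoc (c * d), ← mul_pow]
    gcongr
    linarith
  have h1' := mul_le_mul_of_nonneg_left ((le_abs_self _).trans h1) hV0
  have h2' := mul_le_mul_of_nonneg_left ((le_abs_self _).trans h2) hV0
  rw [abs_le]
  constructor <;> nlinarith

lemma gaps_orthant (d : ℕ) :
    2 ^ d * (volume ({y : Fin d → ℝ | ∀ i, 0 ≤ y i} ∩ {y | ‖WithLp.toLp 2 y‖ ≤ 1})).toReal =
      (volume {y : Fin d → ℝ | ‖WithLp.toLp 2 y‖ ≤ 1}).toReal := by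
  classical
  set B := {y : Fin d → ℝ | ‖WithLp.toLp 2 y‖ ≤ 1} with hB
  set O := {y : Fin d → ℝ | ∀ i, 0 ≤ y i} with hO
  have hBm : MeasurableSet B := by
    apply IsClosed.measurableSet
    exact isClosed_le (by fun_prop) continuous_const
  have hOm : MeasurableSet O := by
    have : O = ⋂ i, {y : Fin d → ℝ | 0 ≤ y i} := by ext; simp [hO]
    rw [this]
    exact MeasurableSet.iInter fun i => measurableSet_le measurable_const (measurable_pi_apply i)
  let Z : Finset (Fin d) → Set (Fin d → ℝ) := fun s => {y | ∀ i, 0 ≤ y i ↔ i ∈ s}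
  have hZm : ∀ s, MeasurableSet (Z s) := by
    intro s
    have : Z s = ⋂ i, {y : Fin d → ℝ | 0 ≤ y i ↔ i ∈ s} := by ext; simp [Z]
    rw [this]
    refine MeasurableSet.iInter fun i => ?_
    exact (measurableSet_le measurable_const (measurable_pi_apply i)).iff (MeasurableSet.const _)
  let T : Finset (Fin d) → (Fin d → ℝ) → (Fin d → ℝ) := fun s y i => if i ∈ s then y i else - y i
  have hT : ∀ s, MeasurePreserving (T s) := by
    intro s
    have := volume_preserving_pi (ι := Fin d) (α' := fun _ => ℝ) (β' := fun _ => ℝ)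
      (f := fun i (u : ℝ) => if i ∈ s then u else -u) (by
        intro i
        by_cases hi : i ∈ s
        · simp only [hi, if_true]
          exact MeasurePreserving.id (volume : Measure ℝ)
        · simpa [hi] using Measure.measurePreserving_neg (volume : Measure ℝ))
    exact this
  have hnull : ∀ᵐ y : Fin d → ℝ, ∀ i, y i ≠ 0 := by
    rw [ae_all_iff]
    intro i
    have := Measure.ae_eval_ne (μ := fun _ : Fin d => (volume : Measure ℝ)) i 0
    simpa [volume_pi] using this
  have heq : ∀ s, volume (Z s ∩ B) = volume (O ∩ B) := by
    intro s
    rw [← (hT s).measure_preimage (hOm.inter hBm).nullMeasurableSet]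
    apply measure_congr
    filter_upwards [hnull] with y hy
    apply propext
    change (y ∈ Z s ∧ y ∈ B) ↔ (T s y ∈ O ∧ T s y ∈ B)
    have hn : T s y ∈ B ↔ y ∈ B := by
      simp only [hB, Set.mem_ofPred_eq, EuclideanSpace.norm_eq]
      have : ∀ i, ‖T s y i‖ = ‖y i‖ := by
        intro i
        simp only [T]; split_ifs <;> simp
      simp [this]
    rw [hn]
    refine and_congr_left fun _ => forall_congr' fun i => ?_
    simp only [T]
    have := hy i
    split_ifs with h
    · simp [h]
    · simp only [h, iff_false, not_le, Left.nonneg_neg_iff]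
      exact ⟨le_of_lt, fun h => lt_of_le_of_ne h this⟩
  have hun : B = ⋃ s ∈ (Finset.univ : Finset (Finset (Fin d))), (Z s ∩ B) := by
    ext y
    simp only [Set.mem_iUnion, Finset.mem_univ, exists_prop, true_and, Set.mem_inter_iff]
    refine ⟨fun h => ⟨Finset.univ.filter fun i => 0 ≤ y i, ?_, h⟩, fun ⟨_, _, h⟩ => h⟩
    intro i; simp
  have hsum : volume B = 2 ^ d * volume (O ∩ B) := by
    conv_lhs => rw [hun]
    rw [measure_biUnion_finset]
    · simp [heq]
    · intro s _ s' _ hss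
      rw [Function.onFun, Set.disjoint_left]
      rintro y ⟨h1, _⟩ ⟨h2, _⟩
      apply hss
      ext i
      rw [← h1 i, ← h2 i]
    · intro s _
      exact (hZm s).inter hBm
  rw [hsum, ENNReal.toReal_mul]
  simp


/-- Let `L ⊂ ℝ^d` be a full-rank lattice and `X = {x_1,…,x_d}` a positive basis for `L`.
Then, as `t → ∞`, the number of gaps of `S(X)` in `L⁺` of Euclidean norm at most `t`
equals `(ω_d (1 − ν(X) 2^d) / (2^d det L)) t^d + O(t^{d−1})`, where `ν(X)` is the
solid-angle measure of the cone `C(X)` spanned by `X` and `ω_d` the volume of the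
Euclidean unit ball in `ℝ^d`. -/
theorem count_gaps (d : ℕ) (hd : 0 < d) (x : Fin d → Fin d → ℝ)
    (hli : LinearIndependent ℝ x) (hpos : ∀ i j, 0 ≤ x i j) :
    let L : Set (Fin d → ℝ) := {v | ∃ a : Fin d → ℤ, v = ∑ i, (a i : ℝ) • x i}
    let S : Set (Fin d → ℝ) := {v | ∃ a : Fin d → ℕ, v = ∑ i, (a i : ℝ) • x i}
    let N : ℝ → ℕ := fun t =>
      Nat.card {y : Fin d → ℝ // (y ∈ L ∧ (∀ i, 0 ≤ y i) ∧ y ∉ S) ∧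
        Real.sqrt (∑ i, y i ^ 2) ≤ t}
    let ωd : ℝ := (volume {p : Fin d → ℝ | ∑ i, p i ^ 2 ≤ 1}).toReal
    let ν : ℝ := (volume ({p : Fin d → ℝ | ∃ c : Fin d → ℝ, (∀ i, 0 ≤ c i) ∧
        p = ∑ i, c i • x i} ∩ {p : Fin d → ℝ | ∑ i, p i ^ 2 ≤ 1})).toReal / ωd
    let detL : ℝ := |(Matrix.of fun k i => x i k).det|
    (fun t : ℝ => (N t : ℝ) - ωd * (1 - ν * 2 ^ d) / (2 ^ d * detL) * t ^ d) =O[atTop]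
      fun t : ℝ => t ^ (d - 1) := by
  intro L S N ωd ν detL
  have hE : ∀ (y : Fin d → ℝ), Real.sqrt (∑ i, y i ^ 2) = ‖WithLp.toLp 2 y‖ := by
    intro y; simp [EuclideanSpace.norm_eq]
  have hE1 : {p : Fin d → ℝ | ∑ i, p i ^ 2 ≤ 1} = {y | ‖WithLp.toLp 2 y‖ ≤ 1} := by
    ext y
    simp only [Set.mem_ofPred_eq, ← hE]
    rw [Real.sqrt_le_left zero_le_one, one_pow]
  have : Nonempty (Fin d) := ⟨⟨0, hd⟩⟩
  let b : Module.Basis (Fin d) ℝ (Fin d → ℝ) := basisOfLinearIndependentOfCardEqFinrank hli (by simp)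
  have hb : ∀ i, b i = x i := fun i => by simp [b]
  have hrepr : ∀ (c : Fin d → ℝ) i, b.repr (∑ j, c j • x j) i = c i := by
    intro c i
    simp only [← hb]
    rw [b.repr_sum_self]
  have hexp : ∀ y, y = ∑ i, b.repr y i • x i := by
    intro y
    simp only [← hb]
    exact (b.sum_repr y).symm
  set O : Set (Fin d → ℝ) := {y | ∀ i, 0 ≤ y i} with hO
  set C : Set (Fin d → ℝ) := {p : Fin d → ℝ | ∃ c : Fin d → ℝ, (∀ i, 0 ≤ c i) ∧
        p = ∑ i, c i • x i} with hC
  have hCO : C ⊆ O := by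
    rintro _ ⟨c, hc, rfl⟩ j
    simp only [Finset.sum_apply, Pi.smul_apply, smul_eq_mul]
    exact Finset.sum_nonneg fun i _ => mul_nonneg (hc i) (hpos i j)
  have hPC : ZSpan.fundamentalDomain b ⊆ C := by
    intro q hq
    exact ⟨fun i => b.repr q i, fun i => ((ZSpan.mem_fundamentalDomain b).1 hq i).1, hexp q⟩
  have hL : ∀ y, y ∈ Submodule.span ℤ (Set.range b) ↔ y ∈ L := by
    intro y
    rw [b.mem_span_iff_repr_mem ℤ]
    constructor
    · intro h
      choose a ha using h
      refine ⟨a, ?_⟩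
      rw [hexp y]
      exact Finset.sum_congr rfl fun i _ => by rw [← ha i]; simp
    · rintro ⟨a, rfl⟩ i
      rw [hrepr]
      exact ⟨a i, by simp⟩
  have hS : ∀ y, y ∈ S ↔ y ∈ L ∧ y ∈ C := by
    intro y
    constructor
    · rintro ⟨a, rfl⟩
      exact ⟨⟨fun i => a i, by simp⟩, ⟨fun i => a i, fun i => by positivity, rfl⟩⟩
    · rintro ⟨⟨a, rfl⟩, c, hc, h⟩
      have ha : ∀ i, 0 ≤ a i := by
        intro i
        have := congrArg (fun v => b.repr v i) h
        simp only [hrepr] at this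
        have h' := hc i
        rw [← this] at h'
        exact_mod_cast h'
      refine ⟨fun i => (a i).toNat, Finset.sum_congr rfl fun i _ => ?_⟩
      have : (((a i).toNat : ℤ) : ℝ) = (a i : ℝ) := by rw [Int.toNat_of_nonneg (ha i)]
      rw [← this, Int.cast_natCast]
  obtain ⟨M₁, hM₁⟩ := gaps_count d b O
    (fun t ht y hy i => mul_nonneg ht.le (hy i))
    (fun y hy q hq i => add_nonneg (hy i) (hCO (hPC hq) i))
  obtain ⟨M₂, hM₂⟩ := gaps_count d b C
    (by
      rintro t ht _ ⟨c, hc, rfl⟩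
      exact ⟨fun i => t * c i, fun i => mul_nonneg ht.le (hc i), by
        simp [Finset.smul_sum, mul_smul]⟩)
    (by
      rintro _ ⟨c, hc, rfl⟩ q hq
      obtain ⟨e, he, rfl⟩ := hPC hq
      exact ⟨fun i => c i + e i, fun i => add_nonneg (hc i) (he i), by
        simp [Finset.sum_add_distrib, add_smul]⟩)
  have hD : (volume (ZSpan.fundamentalDomain b)).toReal = detL := by
    rw [ZSpan.volume_fundamentalDomain, ENNReal.toReal_ofReal (abs_nonneg _)]
    simp only [detL]
    rw [← Matrix.det_transpose]
    congr 2
    ext i j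
    simp [hb]
  have hD0 : 0 < detL := by
    rw [← hD]
    refine ENNReal.toReal_pos (ZSpan.measure_fundamentalDomain_ne_zero b) 
      (ZSpan.fundamentalDomain_isBounded b).measure_lt_top.ne
  have hV1 := gaps_orthant d
  rw [← hO] at hV1
  have hω : ωd = (volume {y : Fin d → ℝ | ‖WithLp.toLp 2 y‖ ≤ 1}).toReal := by
    simp only [ωd, hE1]
  have hν : ν * ωd = (volume (C ∩ {y : Fin d → ℝ | ‖WithLp.toLp 2 y‖ ≤ 1})).toReal := by
    have e : ν = (volume (C ∩ {y : Fin d → ℝ | ‖WithLp.toLp 2 y‖ ≤ 1})).toReal / ωd := by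
      simp only [ν, hE1, hC]
    have hle : (volume (C ∩ {y : Fin d → ℝ | ‖WithLp.toLp 2 y‖ ≤ 1})).toReal ≤ ωd := by
      rw [hω]
      refine ENNReal.toReal_mono ?_ (measure_mono Set.inter_subset_right)
      simpa using gaps_vol_fin d Set.univ 1
    rw [e]
    refine div_mul_cancel_of_imp fun h0 => ?_
    rw [h0] at hle
    exact le_antisymm hle ENNReal.toReal_nonneg
  rw [← hω] at hV1
  set V1 := (volume (O ∩ {y : Fin d → ℝ | ‖WithLp.toLp 2 y‖ ≤ 1})).toReal
  set V2 := (volume (C ∩ {y : Fin d → ℝ | ‖WithLp.toLp 2 y‖ ≤ 1})).toReal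
  have hcoef : ωd * (1 - ν * 2 ^ d) / (2 ^ d * detL) = (V1 - V2) / detL := by
    rw [← hν]
    have : ωd * (1 - ν * 2 ^ d) = 2 ^ d * (V1 - ν * ωd) := by
      rw [← hV1]; ring
    rw [this, mul_div_mul_left _ _ (by positivity)]
  refine IsBigO.of_bound ((M₁ + M₂) / detL) ?_
  filter_upwards [hM₁, hM₂, eventually_gt_atTop 0] with t h1 h2 ht
  obtain ⟨f1, h1⟩ := h1
  obtain ⟨f2, h2⟩ := h2
  set A1 := {y : Fin d → ℝ | y ∈ Submodule.span ℤ (Set.range b) ∧ y ∈ O ∧ ‖WithLp.toLp 2 y‖ ≤ t}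
  set A2 := {y : Fin d → ℝ | y ∈ Submodule.span ℤ (Set.range b) ∧ y ∈ C ∧ ‖WithLp.toLp 2 y‖ ≤ t}
  have hsub : A2 ⊆ A1 := fun y hy => ⟨hy.1, hCO hy.2.1, hy.2.2⟩
  have hN : (N t : ℝ) = A1.ncard - A2.ncard := by
    have e : N t = (A1 \ A2).ncard := by
      rw [← Nat.card_coe_set_eq]
      refine Nat.card_congr (Equiv.subtypeEquivRight fun y => ?_)
      simp only [A1, A2, hE, hS, hL, Set.mem_sdiff, Set.mem_ofPred_eq, hO]
      tauto
    rw [e, ← Set.ncard_sdiff_add_ncard_of_subset hsub f1]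
    push_cast; ring
  rw [hcoef, hN]
  rw [hD] at h1 h2
  have key : ((A1.ncard : ℝ) - A2.ncard) - (V1 - V2) / detL * t ^ d =
      ((A1.ncard * detL - V1 * t ^ d) - (A2.ncard * detL - V2 * t ^ d)) / detL := by
    field_simp
    ring
  rw [key, Real.norm_eq_abs, Real.norm_eq_abs, abs_div, abs_of_pos hD0,
    abs_of_pos (pow_pos ht _), div_mul_eq_mul_div]
  refine div_le_div_of_nonneg_right ?_ hD0.le
  refine (abs_sub _ _).trans ?_
  linarith
end

section
/- Let K be a totally real number field of degree d and I ⊆ O_K a nonzero ideal. Then there exist Q-linearly independent elements s_1,...,s_d ∈ I such that ∏_{i=1}^d h(s_i) ≤ N_K(I)·√|Δ_K|, where h is the Weil height, N_K(I) the ideal norm, and Δ_K the discriminant of K. -/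
open NumberField

/-- The denominator ideal `(𝒪_K : α) = {x ∈ 𝒪_K : xα ∈ 𝒪_K}` of `α ∈ K`; its absolute
norm equals `∏_{v ∤ ∞} max(1,|α|_v)^{d_v}`. -/
noncomputable def denominatorIdeal {K : Type*} [Field K] [NumberField K] (α : K) :
    Ideal (𝓞 K) where
  carrier := {x : 𝓞 K | IsIntegral ℤ ((x : K) * α)}
  add_mem' := by
    intro a b ha hb
    simpa [add_mul] using ha.add hb
  zero_mem' := by simpa using isIntegral_zero
  smul_mem' := by
    intro c y hy
    have hc : IsIntegral ℤ ((c : K)) := RingOfIntegers.isIntegral_coe c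
    simpa [smul_eq_mul, mul_assoc] using hc.mul hy

/-- The absolute Weil height of `α ∈ K`, for a totally real number field `K` of degree
`d` with real embeddings `σ_1,…,σ_d`:
`h(α) = (N(denominator ideal of α) · ∏_i max(1,|σ_i α|))^{1/d}`, which agrees with
`∏_{v ∈ M(K)} max(1,|α|_v)^{d_v/d}`. -/
noncomputable def weilHeight {K : Type*} [Field K] [NumberField K]
    (σ : Fin (Module.finrank ℚ K) → (K →+* ℝ)) (α : K) : ℝ :=
  ((Ideal.absNorm (denominatorIdeal α) : ℝ) * ∏ i, max 1 |σ i α|) ^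
    ((Module.finrank ℚ K : ℝ)⁻¹)

lemma greedy {n : ℕ} (b : Module.Basis (Fin n) ℝ (EuclideanSpace ℝ (Fin n))) :
    ∃ (W : ℕ → Submodule ℝ (EuclideanSpace ℝ (Fin n))) (s : Fin n → EuclideanSpace ℝ (Fin n)),
      (∀ i, s i ∈ Submodule.span ℤ (Set.range b)) ∧ LinearIndependent ℝ s ∧ W 0 = ⊥ ∧
      (∀ i : Fin n, W (i + 1) = W i ⊔ Submodule.span ℝ {s i}) ∧
      (∀ i : Fin n, ∀ w ∈ Submodule.span ℤ (Set.range b), w ∉ W i → ‖s i‖ ≤ ‖w‖) ∧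
      ∀ i j : Fin n, i ≤ j → s j ∉ W i := by
  classical
  have key : ∀ W : Submodule ℝ (EuclideanSpace ℝ (Fin n)), ∃ v ∈ Submodule.span ℤ (Set.range b),
      W ≠ ⊤ → (v ∉ W ∧ ∀ w ∈ Submodule.span ℤ (Set.range b), w ∉ W → ‖v‖ ≤ ‖w‖) := by
    intro W
    by_cases hW : W = ⊤
    · exact ⟨0, zero_mem _, fun h => absurd hW h⟩
    obtain ⟨i, hi⟩ : ∃ i, b i ∉ W := by
      by_contra! h
      apply hW
      rw [eq_top_iff, ← b.span_eq, Submodule.span_le]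
      rintro _ ⟨i, rfl⟩
      exact h i
    have hfin := ZSpan.setFinite_inter b (Metric.isBounded_closedBall (x := 0) (r := ‖b i‖))
    have hfin2 := hfin.subset (Set.sep_subset _ (fun v => v ∉ W))
    have hbi : b i ∈ {v ∈ Metric.closedBall 0 ‖b i‖ ∩ (Submodule.span ℤ (Set.range b) : Set _) | v ∉ W} :=
      ⟨⟨by simp, Submodule.subset_span ⟨i, rfl⟩⟩, hi⟩
    obtain ⟨v, hv, hmin⟩ := Set.exists_min_image _ (fun v => ‖v‖) hfin2 ⟨_, hbi⟩
    refine ⟨v, hv.1.2, fun _ => ⟨hv.2, fun w hw hwW => ?_⟩⟩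
    by_cases hwb : ‖w‖ ≤ ‖b i‖
    · exact hmin w ⟨⟨by simpa using hwb, hw⟩, hwW⟩
    · exact (hmin _ hbi).trans (not_le.mp hwb).le
  choose f hfL hf using key
  obtain ⟨W, W0, WS⟩ : ∃ W : ℕ → Submodule ℝ (EuclideanSpace ℝ (Fin n)), W 0 = ⊥ ∧
      ∀ k, W (k+1) = W k ⊔ Submodule.span ℝ {f (W k)} :=
    ⟨fun k => Nat.rec ⊥ (fun _ V => V ⊔ Submodule.span ℝ {f V}) k, rfl, fun k => rfl⟩
  have hle : ∀ k : ℕ, Module.finrank ℝ (W k) ≤ k := by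
    intro k
    induction k with
    | zero => simp [W0]
    | succ k ih =>
      rw [WS]
      have h1 := Submodule.finrank_add_le_finrank_add_finrank (W k) (Submodule.span ℝ {f (W k)})
      have h2 := finrank_span_le_card (R := ℝ) ({f (W k)} : Set (EuclideanSpace ℝ (Fin n)))
      simp at h2
      omega
  have hne : ∀ k < n, W k ≠ ⊤ := by
    intro k hk h
    have := hle k
    rw [h, finrank_top] at this
    simp at this
    omega
  have hge : ∀ k : ℕ, k ≤ n → k ≤ Module.finrank ℝ (W k) := by
    intro k
    induction k with
    | zero => simp
    | succ k ih =>
      intro hk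
      have h1 := ih (by omega)
      have : W k < W (k+1) := by
        rw [WS]
        refine lt_of_le_of_ne le_sup_left fun h => (hf _ (hne k (by omega))).1 ?_
        have h' : f (W k) ∈ W k ⊔ Submodule.span ℝ {f (W k)} := Submodule.mem_sup_right (Submodule.mem_span_singleton_self _)
        rwa [← h] at h'
      have := Submodule.finrank_lt_finrank_of_lt this
      omega
  have hWm : Monotone W := monotone_nat_of_le_succ fun k => by rw [WS]; exact le_sup_left
  refine ⟨W, fun i => f (W i), fun i => hfL _, ?_, W0, fun i => WS i, fun i => (hf _ (hne i i.2)).2,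
    fun i j hij h => (hf _ (hne j j.2)).1 (hWm (Fin.le_def.mp hij) h)⟩
  have hsp : ∀ k ≤ n, W k ≤ Submodule.span ℝ (Set.range fun i : Fin n => f (W i)) := by
    intro k
    induction k with
    | zero => simp [W0]
    | succ k ih =>
      intro hk
      rw [WS]
      refine sup_le (ih (by omega)) ?_
      rw [Submodule.span_singleton_le_iff_mem]
      exact Submodule.subset_span ⟨⟨k, by omega⟩, rfl⟩
  refine linearIndependent_of_top_le_span_of_card_eq_finrank ?_ (by simp)
  have : W n = ⊤ := Submodule.eq_top_of_finrank_eq (by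
    have := hge n le_rfl; have := hle n; simp; omega)
  rw [← this]
  exact hsp n le_rfl

lemma vol_fd {n : ℕ} (b : Module.Basis (Fin n) ℝ (EuclideanSpace ℝ (Fin n))) :
    MeasureTheory.volume (ZSpan.fundamentalDomain b) =
      ENNReal.ofReal |(Matrix.of fun i j => b i j).det| := by
  rw [ZSpan.measure_fundamentalDomain b MeasureTheory.volume (EuclideanSpace.basisFun (Fin n) ℝ).toBasis]
  rw [MeasureTheory.measure_congr (ZSpan.fundamentalDomain_ae_parallelepiped _ _)]
  have := (EuclideanSpace.basisFun (Fin n) ℝ).volume_parallelepiped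
  simp only [OrthonormalBasis.coe_toBasis] at this ⊢
  rw [this, mul_one, ← Matrix.det_transpose]
  rfl

lemma minkII {n : ℕ} (hn : 0 < n) (b : Module.Basis (Fin n) ℝ (EuclideanSpace ℝ (Fin n))) :
    ∃ s : Fin n → EuclideanSpace ℝ (Fin n),
      (∀ i, s i ∈ Submodule.span ℤ (Set.range b)) ∧ LinearIndependent ℝ s ∧
      (∏ i, ‖s i‖) * (√Real.pi ^ n / Real.Gamma (n / 2 + 1)) ≤
        2 ^ n * |(Matrix.of fun i j => b i j).det| := by
  classical
  obtain ⟨W, s, hsL, hli, W0, WS, hmin, hsW⟩ := greedy b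
  refine ⟨s, hsL, hli, ?_⟩
  have : Nonempty (Fin n) := ⟨⟨0, hn⟩⟩
  have hs0 : ∀ i, 0 < ‖s i‖ := fun i => norm_pos_iff.mpr (hli.ne_zero i)
  let e := InnerProductSpace.gramSchmidtOrthonormalBasis (𝕜 := ℝ) (ι := Fin n) (by simp) s
  have htri : ∀ i j : Fin n, i < j → inner ℝ (e j) (s i) = 0 := fun i j hij =>
    InnerProductSpace.gramSchmidtOrthonormalBasis_inv_triangular _ _ hij
  have hWe : ∀ k : Fin n, ∀ m ≤ (k : ℕ), W m ≤ LinearMap.ker (innerₛₗ ℝ (e k)) := by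
    intro k m
    induction m with
    | zero => simp [W0]
    | succ m ih =>
      intro hm
      have := WS ⟨m, by omega⟩
      simp only at this
      rw [this]
      refine sup_le (ih (by omega)) ?_
      rw [Submodule.span_singleton_le_iff_mem]
      simpa using htri ⟨m, by omega⟩ k (by rw [Fin.lt_def]; exact hm)
  have hmono : ∀ i j : Fin n, i ≤ j → ‖s i‖ ≤ ‖s j‖ := by
    intro i j hij
    exact hmin i _ (hsL j) (hsW i j hij)
  let D : Matrix (Fin n) (Fin n) ℝ := Matrix.diagonal fun i => ‖s i‖⁻¹
  let T : EuclideanSpace ℝ (Fin n) →ₗ[ℝ] EuclideanSpace ℝ (Fin n) :=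
    Matrix.toLin e.toBasis e.toBasis D
  have hdet : LinearMap.det T = ∏ i, ‖s i‖⁻¹ := by
    simp [T, D, LinearMap.det_toLin]
  have hT : ∀ v i, e.repr (T v) i = ‖s i‖⁻¹ * e.repr v i := by
    intro v i
    have := congrFun (LinearMap.toMatrix_mulVec_repr e.toBasis e.toBasis T v) i
    simp only [T, LinearMap.toMatrix_toLin] at this
    simpa [D, Matrix.mulVec_diagonal, T] using this.symm
  by_contra! hlt
  have hP : 0 < ∏ i, ‖s i‖ := Finset.prod_pos fun i _ => hs0 i
  have : Countable (Submodule.span ℤ (Set.range b)).toAddSubgroup :=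
    inferInstanceAs (Countable (Submodule.span ℤ (Set.range b)))
  obtain ⟨v, hv0, hvS⟩ := MeasureTheory.exists_ne_zero_mem_lattice_of_measure_mul_two_pow_lt_measure
    (μ := MeasureTheory.volume) (L := (Submodule.span ℤ (Set.range b)).toAddSubgroup)
    (s := T ⁻¹' Metric.ball 0 1)
    (ZSpan.isAddFundamentalDomain' b MeasureTheory.volume)
    (by intro x hx; simpa using hx)
    ((convex_ball _ _).linear_preimage _)
    (by
      rw [MeasureTheory.Measure.addHaar_preimage_linearMap _ (by rw [hdet]; simpa [Finset.prod_eq_zero_iff] using fun i => hli.ne_zero i),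
        EuclideanSpace.volume_ball, vol_fd, hdet]
      simp only [Finset.prod_inv_distrib, inv_inv, abs_of_pos hP, finrank_euclideanSpace,
        Fintype.card_fin, ENNReal.ofReal_one, one_pow, one_mul]
      rw [← ENNReal.ofReal_mul hP.le, show (2:ENNReal)^n = ENNReal.ofReal (2^n) by rw [ENNReal.ofReal_pow (by norm_num)]; simp,
        ← ENNReal.ofReal_mul (abs_nonneg _)]
      rw [ENNReal.ofReal_lt_ofReal_iff_of_nonneg (by positivity)]
      linarith)
  have hvL : (v : EuclideanSpace ℝ (Fin n)) ∈ Submodule.span ℤ (Set.range b) := v.2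
  have hv0' : (v : EuclideanSpace ℝ (Fin n)) ≠ 0 := by simpa using hv0
  generalize (v : EuclideanSpace ℝ (Fin n)) = w at *
  clear hv0 v
  have hex : (Finset.univ.filter fun k => e.repr w k ≠ 0).Nonempty := by
    by_contra h
    apply hv0'
    apply e.repr.injective
    ext k
    simp [Finset.not_nonempty_iff_eq_empty, Finset.filter_eq_empty_iff] at h
    simp [@h k]
  obtain ⟨k, hk, hkmax⟩ := Finset.exists_max_image _ id hex
  simp only [Finset.mem_filter, Finset.mem_univ, true_and, id] at hk hkmax
  have hwW : w ∉ W k := by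
    intro h
    apply hk
    have := hWe k k le_rfl h
    simpa [OrthonormalBasis.repr_apply_apply] using this
  have hkw := hmin k w hvL hwW
  have hnorm : ‖T w‖ < 1 := by simpa using hvS
  have h1 : ‖T w‖ ^ 2 < 1 := by
    have := norm_nonneg (T w); nlinarith
  rw [← e.repr.norm_map, EuclideanSpace.norm_sq_eq] at h1
  have h2 : (‖s k‖⁻¹ * ‖w‖) ^ 2 ≤ ∑ i, ‖e.repr (T w) i‖ ^ 2 := by
    rw [mul_pow, ← e.repr.norm_map w, EuclideanSpace.norm_sq_eq, Finset.mul_sum]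
    refine Finset.sum_le_sum fun i _ => ?_
    rw [hT, norm_mul, mul_pow]
    by_cases hi : e.repr w i = 0
    · simp [hi]
    have h3 := hmono i k (hkmax i hi)
    rw [norm_inv, norm_norm]
    gcongr
    exact hs0 i
  have h4 : 1 ≤ ‖s k‖⁻¹ * ‖w‖ := by
    rw [inv_mul_eq_div, le_div_iff₀ (hs0 k)]; simpa using hkw
  nlinarith

lemma gammaBoundStrong (n : ℕ) (hn : 4 ≤ n) :
    (8:ℝ) ^ n * Real.Gamma (n / 2 + 1) ^ 2 ≤ (Real.pi * n) ^ n := by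
  have hpi := Real.pi_gt_three
  have hpi2 : (9:ℝ) < Real.pi ^ 2 := by nlinarith
  induction n using Nat.strong_induction_on with
  | _ n ih =>
  rcases Nat.lt_or_ge n 6 with h6 | h6
  · interval_cases n
    · have : Real.Gamma (((4:ℕ):ℝ)/2+1) = 2 := by
        rw [show (((4:ℕ):ℝ)/2+1) = ((2:ℕ):ℝ)+1 by norm_num, Real.Gamma_nat_eq_factorial]; norm_num
      rw [this]
      have : (81:ℝ) < Real.pi^4 := by nlinarith
      rw [mul_pow]; norm_num; linarith
    · have : Real.Gamma (((5:ℕ):ℝ)/2+1) = 15/8*√Real.pi := by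
        rw [show (((5:ℕ):ℝ)/2+1) = (1/2+1+1)+1 by norm_num, Real.Gamma_add_one (by norm_num), Real.Gamma_add_one (by norm_num), Real.Gamma_add_one (by norm_num), Real.Gamma_one_half_eq]; ring
      rw [this, mul_pow (15/8), Real.sq_sqrt Real.pi_pos.le]
      have : (81:ℝ) < Real.pi^4 := by nlinarith
      rw [mul_pow, pow_succ Real.pi 4]; norm_num; nlinarith
  · obtain ⟨m, rfl⟩ : ∃ m, n = m + 2 := ⟨n - 2, by omega⟩
    have h := ih m (by omega) (by omega)
    have hm : (0:ℝ) < m := by exact_mod_cast (by omega : 0 < m)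
    rw [show (((m+2:ℕ):ℝ)/2+1) = ((m:ℝ)/2+1)+1 by push_cast; ring,
      Real.Gamma_add_one (by positivity)]
    have hb : 1 + (m:ℝ) * (2/m) ≤ (1 + 2/m)^m := one_add_mul_le_pow (by
      have : 0 < 2/(m:ℝ) := by positivity
      linarith) m
    rw [mul_div_cancel₀ _ hm.ne'] at hb
    have hb' : 3 * (m:ℝ)^m ≤ ((m:ℝ)+2)^m := by
      have : (m:ℝ)+2 = (1+2/m)*m := by field_simp
      rw [this, mul_pow]
      have : (0:ℝ) < (m:ℝ)^m := by positivity
      nlinarith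
    calc (8:ℝ)^(m+2) * (((m:ℝ)/2+1) * Real.Gamma ((m:ℝ)/2+1))^2
        = (16 * (m+2)^2) * (8^m * Real.Gamma ((m:ℝ)/2+1)^2) := by ring
      _ ≤ (16 * (m+2)^2) * (Real.pi * m)^m := by gcongr
      _ = 16 * (m+2)^2 * Real.pi^m * (m:ℝ)^m := by rw [mul_pow]; ring
      _ ≤ 27 * (m+2)^2 * Real.pi^m * (m:ℝ)^m := by gcongr; norm_num
      _ = 9 * (m+2)^2 * Real.pi^m * (3*(m:ℝ)^m) := by ring
      _ ≤ Real.pi^2 * (m+2)^2 * Real.pi^m * ((m:ℝ)+2)^m := by gcongr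
      _ = _ := by push_cast; rw [mul_pow Real.pi]; ring

lemma gammaBound (n : ℕ) (hn : 0 < n) :
    (8 - 4 / n:ℝ) ^ n * Real.Gamma (n / 2 + 1) ^ 2 ≤ (Real.pi * n) ^ n := by
  have hpi := Real.pi_gt_three
  have hpi2 : (9:ℝ) < Real.pi ^ 2 := by nlinarith
  rcases Nat.lt_or_ge n 4 with h6 | h6
  · interval_cases n
    · have : Real.Gamma (((1:ℕ):ℝ)/2+1) = 1/2*√Real.pi := by
        rw [show (((1:ℕ):ℝ)/2+1) = 1/2+1 by norm_num, Real.Gamma_add_one (by norm_num), Real.Gamma_one_half_eq]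
      rw [this, mul_pow (1/2), Real.sq_sqrt Real.pi_pos.le]
      norm_num; linarith
    · have : Real.Gamma (((2:ℕ):ℝ)/2+1) = 1 := by
        rw [show (((2:ℕ):ℝ)/2+1) = ((1:ℕ):ℝ)+1 by norm_num, Real.Gamma_nat_eq_factorial]; norm_num
      rw [this]; norm_num; nlinarith
    · have : Real.Gamma (((3:ℕ):ℝ)/2+1) = 3/4*√Real.pi := by
        rw [show (((3:ℕ):ℝ)/2+1) = (1/2+1)+1 by norm_num, Real.Gamma_add_one (by norm_num), Real.Gamma_add_one (by norm_num), Real.Gamma_one_half_eq]; ring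
      rw [this, mul_pow (3/4), Real.sq_sqrt Real.pi_pos.le]
      norm_num; nlinarith
  · refine le_trans ?_ (gammaBoundStrong n h6)
    have h4 : (4:ℝ) ≤ n := by exact_mod_cast h6
    have : 4/(n:ℝ) ≤ 1 := by rw [div_le_one (by linarith)]; exact h4
    gcongr
    · linarith
    · have : 0 ≤ 4/(n:ℝ) := by positivity
      linarith

lemma constBound (n : ℕ) (hn : 0 < n) :
    √((2 - 1 / n) / n) ^ n * 2 ^ n ≤ √Real.pi ^ n / Real.Gamma (n / 2 + 1) := by
  have hn1 : (1:ℝ) ≤ n := by exact_mod_cast hn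
  have hG : 0 < Real.Gamma ((n:ℝ) / 2 + 1) := Real.Gamma_pos_of_pos (by positivity)
  have h1 : 1 / (n:ℝ) ≤ 1 := by rw [div_le_one (by linarith)]; exact hn1
  rw [le_div_iff₀ hG]
  apply le_of_sq_le_sq _ (by positivity)
  rw [mul_pow, mul_pow, ← pow_mul, mul_comm n 2, pow_mul, Real.sq_sqrt (by
    apply div_nonneg <;> linarith), ← pow_mul (√Real.pi), mul_comm n 2, pow_mul (√Real.pi), Real.sq_sqrt Real.pi_pos.le]
  have h := gammaBound n hn
  rw [mul_pow Real.pi] at h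
  have hp : (0:ℝ) < (n:ℝ)^n := by positivity
  refine le_of_mul_le_mul_right (h.trans' (le_of_eq ?_)) hp
  rw [show (8 - 4/(n:ℝ)) = ((2 - 1/n)/n) * 4 * n by field_simp; ring, mul_pow, mul_pow,
    ← pow_mul, mul_comm n 2, pow_mul]
  norm_num
  ring

lemma heightBound (n : ℕ) (v : EuclideanSpace ℝ (Fin n)) (hn : 0 < n) (h : 1 ≤ ∏ i, |v i|) :
    (∏ i, max 1 |v i|) ^ ((n:ℝ)⁻¹) ≤ √((2 - 1 / n) / n) * ‖v‖ := by
  have hn1 : (1:ℝ) ≤ n := by exact_mod_cast hn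
  have hn0 : (0:ℝ) < n := by linarith
  have h1 : 1 / (n:ℝ) ≤ 1 := by rw [div_le_one (by linarith)]; exact hn1
  have amgm : ∀ z : Fin n → ℝ, (∀ i, 0 ≤ z i) → (∏ i, z i) ^ ((n:ℝ)⁻¹) ≤ (∑ i, z i) / n := by
    intro z hz
    have := Real.geom_mean_le_arith_mean_weighted Finset.univ (fun _ => (n:ℝ)⁻¹) z
      (by intros; positivity) (by simp [hn0.ne']) (fun i _ => hz i)
    rw [Real.finsetProd_rpow _ _ (fun i _ => hz i), ← Finset.mul_sum] at this
    rwa [div_eq_inv_mul]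
  have hnorm : ‖v‖ ^ 2 = ∑ i, |v i| ^ 2 := by
    rw [EuclideanSpace.norm_sq_eq]; simp
  have hN : (n:ℝ) ≤ ‖v‖^2 := by
    have h2 := amgm (fun i => |v i|^2) (fun i => by positivity)
    rw [Finset.prod_pow, ← hnorm] at h2
    have h3 : (1:ℝ) ≤ ((∏ i, |v i|)^2) ^ ((n:ℝ)⁻¹) :=
      Real.one_le_rpow (by nlinarith) (by positivity)
    have := h3.trans h2
    rwa [le_div_iff₀ hn0, one_mul] at this
  obtain ⟨k, hk⟩ : ∃ k, 1 ≤ |v k| := by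
    by_contra! hc
    have : ∏ i, |v i| < ∏ i : Fin n, (1:ℝ) := by
      by_cases h0 : ∃ i, |v i| = 0
      · obtain ⟨i, hi⟩ := h0
        rw [Finset.prod_eq_zero (Finset.mem_univ i) hi]; simp
      · push Not at h0
        exact Finset.prod_lt_prod_of_nonempty (fun i _ => lt_of_le_of_ne (abs_nonneg _) (h0 i).symm) (fun i _ => hc i) ⟨⟨0, hn⟩, Finset.mem_univ _⟩
    simp at this
    linarith
  have hsum : ∑ i, (max 1 |v i|)^2 ≤ ‖v‖^2 + (n - 1) := by
    have e2 : ((n:ℝ) - 1) = ∑ i : Fin n, (if i = k then (0:ℝ) else 1) := by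
      simp [Finset.sum_ite, Finset.filter_ne', Finset.card_erase_of_mem, Nat.cast_sub hn]
    rw [hnorm, e2, ← Finset.sum_add_distrib]
    refine Finset.sum_le_sum fun i _ => ?_
    by_cases hi : i = k
    · subst hi; simp [max_eq_right hk]
    · rcases le_total 1 |v i| with h' | h' <;> simp [h', hi, sq_nonneg]
  have hmain := amgm (fun i => (max 1 |v i|)^2) (fun i => by positivity)
  have hp0 : 0 ≤ ∏ i, max 1 |v i| := Finset.prod_nonneg fun i _ => by positivity
  apply le_of_sq_le_sq _ (by positivity)
  rw [mul_pow, Real.sq_sqrt (by apply div_nonneg <;> linarith)]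
  rw [Finset.prod_pow, ← Real.rpow_natCast, ← Real.rpow_mul hp0, mul_comm, Real.rpow_mul hp0, Real.rpow_natCast] at hmain
  refine hmain.trans ((div_le_div_of_nonneg_right hsum hn0.le).trans ?_)
  rw [div_mul_eq_mul_div]
  apply div_le_div_of_nonneg_right _ hn0.le
  have : (1 - 1/(n:ℝ)) * n ≤ (1 - 1/(n:ℝ)) * ‖v‖^2 := mul_le_mul_of_nonneg_left hN (by linarith)
  have h5 : (1 - 1/(n:ℝ)) * n = n - 1 := by field_simp
  linarith

lemma den_int {K : Type*} [Field K] [NumberField K] (x : 𝓞 K) :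
    denominatorIdeal (x : K) = ⊤ := by
  rw [Ideal.eq_top_iff_one]
  change IsIntegral ℤ (((1 : 𝓞 K) : K) * x)
  simpa using RingOfIntegers.isIntegral_coe x

lemma embEquiv {K : Type*} [Field K] [NumberField K]
    (σ : Fin (Module.finrank ℚ K) → (K →+* ℝ)) (hσ : Function.Injective σ) :
    ∃ e : Fin (Module.finrank ℚ K) ≃ (K →ₐ[ℚ] ℂ), ∀ i x, e i x = ((σ i x : ℝ) : ℂ) := by
  have hb : Function.Bijective fun i => (Complex.ofRealHom.comp (σ i)).toRatAlgHom := by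
    rw [Fintype.bijective_iff_injective_and_card]
    constructor
    · intro i j h
      apply hσ
      ext x
      have := DFunLike.congr_fun h x
      simpa using this
    · simp [AlgHom.card]
  exact ⟨Equiv.ofBijective _ hb, fun i x => rfl⟩

lemma norm_ge {K : Type*} [Field K] [NumberField K]
    (σ : Fin (Module.finrank ℚ K) → (K →+* ℝ)) (hσ : Function.Injective σ)
    (x : 𝓞 K) (hx : x ≠ 0) : 1 ≤ ∏ i, |σ i x| := by
  obtain ⟨e, he⟩ := embEquiv σ hσ
  have h := Algebra.norm_eq_prod_embeddings ℚ ℂ (x : K)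
  rw [← e.prod_comp] at h
  simp only [he] at h
  rw [← Algebra.coe_norm_int] at h
  have h2 : ((Algebra.norm ℤ x : ℤ) : ℝ) = ∏ i, σ i x := by
    have : (((Algebra.norm ℤ x : ℤ) : ℝ) : ℂ) = ((∏ i, σ i x : ℝ) : ℂ) := by
      push_cast
      rw [← h]; simp
    exact_mod_cast this
  rw [← Finset.abs_prod, ← h2, ← Int.cast_abs]
  exact_mod_cast Int.one_le_abs (Algebra.norm_ne_zero_iff.mpr hx)

lemma det_int {K : Type*} [Field K] [NumberField K]
    (σ : Fin (Module.finrank ℚ K) → (K →+* ℝ)) (hσ : Function.Injective σ)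
    (b : Module.Basis (Fin (Module.finrank ℚ K)) ℤ (𝓞 K)) :
    |(Matrix.of fun i j => σ j (b i : K)).det| = √|(discr K : ℝ)| := by
  obtain ⟨e, he⟩ := embEquiv σ hσ
  have h := Algebra.discr_eq_det_embeddingsMatrixReindex_pow_two ℚ ℂ (fun i => (b i : K)) e
  have h1 : Algebra.discr ℚ (fun i => (b i : K)) = discr K := by
    rw [← discr_eq_discr K b]
    have := Algebra.discr_localizationLocalization ℤ (nonZeroDivisors ℤ) (Rₘ := ℚ) K b
    simp only [eq_intCast] at this
    rw [← this]
    congr 1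
    ext i
    simp
  have h2 : Algebra.embeddingsMatrixReindex ℚ ℂ (fun i => (b i : K)) e =
      (Matrix.of fun i j => σ j (b i : K)).map Complex.ofRealHom := by
    ext i j
    simp [Algebra.embeddingsMatrixReindex, Algebra.embeddingsMatrix, he]
  have h3 : (discr K : ℝ) = (Matrix.of fun i j => σ j (b i : K)).det ^ 2 := by
    rw [h1, h2, ← RingHom.mapMatrix_apply, ← RingHom.map_det] at h
    have : ((discr K : ℝ) : ℂ) = (((Matrix.of fun i j => σ j (b i : K)).det ^ 2 : ℝ) : ℂ) := by
      push_cast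
      simpa using h
    exact_mod_cast this
  rw [h3, abs_pow, sq_abs, Real.sqrt_sq_eq_abs]

lemma det_ideal {K : Type*} [Field K] [NumberField K]
    (σ : Fin (Module.finrank ℚ K) → (K →+* ℝ)) (hσ : Function.Injective σ)
    (I : Ideal (𝓞 K)) (bI : Module.Basis (Fin (Module.finrank ℚ K)) ℤ I)
    (b : Module.Basis (Fin (Module.finrank ℚ K)) ℤ (𝓞 K)) :
    |(Matrix.of fun i j => σ j ((bI i : 𝓞 K) : K)).det| =
      (Ideal.absNorm I : ℝ) * √|(discr K : ℝ)| := by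
  rw [← det_int σ hσ b, ← Ideal.natAbs_det_basis_change b I bI]
  have : (Matrix.of fun i j => σ j ((bI i : 𝓞 K) : K)) =
      ((b.toMatrix ((↑) ∘ bI)).map (Int.castRingHom ℝ)).transpose * (Matrix.of fun i j => σ j (b i : K)) := by
    ext i j
    rw [Matrix.mul_apply]
    simp only [Matrix.of_apply, Matrix.transpose_apply, Matrix.map_apply, Module.Basis.toMatrix_apply, Function.comp]
    conv_lhs => rw [← b.sum_repr (bI i : 𝓞 K)]
    simp [map_sum]
  rw [this, Matrix.det_mul, Matrix.det_transpose, abs_mul, ← RingHom.mapMatrix_apply, ← RingHom.map_det, Module.Basis.det_apply]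
  congr 1
  simp [Nat.cast_natAbs]

/-- Let `K` be a totally real number field of degree `d` with real embeddings
`σ_1,…,σ_d` and `I ⊆ 𝒪_K` a nonzero ideal. Then there exist `ℚ`-linearly independent
elements `s_1,…,s_d ∈ I` with `∏_i h(s_i) ≤ N_K(I)·√|Δ_K|`. -/
theorem ideal_successive_minima_height (K : Type*) [Field K] [NumberField K]
    (σ : Fin (Module.finrank ℚ K) → (K →+* ℝ)) (hσ : Function.Injective σ)
    (I : Ideal (𝓞 K)) (hI : I ≠ ⊥) :
    ∃ s : Fin (Module.finrank ℚ K) → 𝓞 K, (∀ i, s i ∈ I) ∧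
      LinearIndependent ℚ (fun i => (s i : K)) ∧
      ∏ i, weilHeight σ (s i : K) ≤
        (Ideal.absNorm I : ℝ) * Real.sqrt |(discr K : ℝ)| := by
  classical
  have hn : 0 < Module.finrank ℚ K := Module.finrank_pos
  let b : Module.Basis (Fin (Module.finrank ℚ K)) ℤ (𝓞 K) :=
    (Module.finBasis ℤ (𝓞 K)).reindex (finCongr (RingOfIntegers.rank K))
  let bI := Ideal.selfBasis b I hI
  have hdet := det_ideal σ hσ I bI b
  let ι : K →ₗ[ℚ] EuclideanSpace ℝ (Fin (Module.finrank ℚ K)) :=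
    { toFun := fun x => WithLp.toLp 2 fun j => σ j x
      map_add' := fun x y => by ext j; simp
      map_smul' := fun q x => by ext j; simp [Rat.smul_def] }
  have hι : ∀ x j, ι x j = σ j x := fun x j => rfl
  have hdet0 : (Matrix.of fun i j => σ j ((bI i : 𝓞 K) : K)).det ≠ 0 := by
    rw [← abs_pos, hdet]
    have h1 : 0 < |(discr K : ℝ)| := abs_pos.mpr (by exact_mod_cast discr_ne_zero K)
    have h2 : (0:ℝ) < Ideal.absNorm I := by
      exact_mod_cast Nat.pos_of_ne_zero (by rwa [Ne, Ideal.absNorm_eq_zero_iff])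
    positivity
  have hli : LinearIndependent ℝ (fun i => ι ((bI i : 𝓞 K) : K)) := by
    have := Matrix.linearIndependent_rows_of_det_ne_zero hdet0
    exact LinearIndependent.of_comp (WithLp.linearEquiv 2 ℝ (Fin (Module.finrank ℚ K) → ℝ)).toLinearMap this
  have : Nonempty (Fin (Module.finrank ℚ K)) := ⟨⟨0, hn⟩⟩
  let B := basisOfLinearIndependentOfCardEqFinrank hli (by simp)
  have hB : ⇑B = fun i => ι ((bI i : 𝓞 K) : K) := coe_basisOfLinearIndependentOfCardEqFinrank _ _
  obtain ⟨t, htL, htli, htb⟩ := minkII hn B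
  have hex : ∀ i, ∃ x ∈ I, ι (x : K) = t i := by
    intro i
    have h := htL i
    rw [hB] at h
    obtain ⟨c, hc⟩ := (Submodule.mem_span_range_iff_exists_fun ℤ).mp h
    refine ⟨∑ j, c j • (bI j : 𝓞 K), Ideal.sum_mem _ fun j _ => ?_, ?_⟩
    · exact zsmul_mem (bI j).2 _
    · change ι (algebraMap (𝓞 K) K _) = _
      rw [← hc, map_sum, map_sum]
      refine Finset.sum_congr rfl fun j _ => ?_
      rw [map_zsmul (algebraMap (𝓞 K) K), map_zsmul ι]
  choose s hsI hst using hex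
  have hs0 : ∀ i, s i ≠ 0 := by
    intro i h
    apply htli.ne_zero i
    rw [← hst, h]; simp
  refine ⟨s, hsI, ?_, ?_⟩
  · apply LinearIndependent.of_comp ι
    have : (⇑ι ∘ fun i => (s i : K)) = t := funext hst
    rw [this]
    exact htli.restrict_scalars' ℚ
  · have hh : ∀ i, weilHeight σ (s i : K) ≤
        √((2 - 1 / (Module.finrank ℚ K : ℕ)) / (Module.finrank ℚ K : ℕ)) * ‖t i‖ := by
      intro i
      rw [weilHeight, den_int, Ideal.absNorm_top, Nat.cast_one, one_mul, ← hst]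
      exact heightBound _ (ι (s i)) hn (norm_ge σ hσ _ (hs0 i))
    calc ∏ i, weilHeight σ (s i : K) ≤ ∏ i, (√((2 - 1 / (Module.finrank ℚ K : ℕ)) / (Module.finrank ℚ K : ℕ)) * ‖t i‖) := by
          refine Finset.prod_le_prod (fun i _ => ?_) fun i _ => hh i
          unfold weilHeight
          have : 0 ≤ ∏ j, max 1 |σ j (s i : K)| := Finset.prod_nonneg fun i _ => by positivity
          positivity
      _ ≤ _ := by
        rw [Finset.prod_mul_distrib, Finset.prod_const, Finset.card_univ, Fintype.card_fin, ← hdet]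
        simp only [hB, hι] at htb
        have hc := constBound _ hn
        have hP : 0 ≤ ∏ i, ‖t i‖ := Finset.prod_nonneg fun i _ => norm_nonneg _
        have h2 := (mul_le_mul_of_nonneg_left hc hP).trans htb
        have h3 : (0:ℝ) < 2 ^ Module.finrank ℚ K := by positivity
        refine le_of_mul_le_mul_left ?_ h3
        refine le_trans (le_of_eq ?_) h2
        ring
end

section
/- Let K be a totally real number field of degree d, I ⊆ O_K a nonzero ideal, and L_I = Σ(I) ⊂ R^d its image under the Minkowski embedding Σ = (σ_1,...,σ_d). Then the Euclidean covering radius satisfies μ(L_I) ≤ (d^{3/2}/2)·N_K(I)·√|Δ_K|. -/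
open NumberField

open MeasureTheory in
/-- If `L` has minimum at least `1`, a fundamental domain of measure `D`, and the ball of radius
`1/2` has measure at least one, then every point is within distance `D` of `L`. -/
lemma covering_of_min {E : Type*} [NormedAddCommGroup E] [NormedSpace ℝ E]
    [MeasurableSpace E] [BorelSpace E] [FiniteDimensional ℝ E] (μ : Measure E)
    [μ.IsAddHaarMeasure] (L : Submodule ℤ E) [Countable L] (F : Set E) (D : ℝ) (hD0 : 0 ≤ D)
    (fund : IsAddFundamentalDomain L F μ) (hF : μ F = ENNReal.ofReal D)
    (hmin : ∀ x ∈ L, x ≠ 0 → 1 ≤ ‖x‖) (hball : 1 ≤ μ (Metric.ball (0 : E) (1 / 2))) (p : E) :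
    ∃ x ∈ L, ‖p - x‖ ≤ D := by
  by_contra! hcon
  have hne : (L : Set E).Nonempty := ⟨0, L.zero_mem⟩
  have hfp : D ≤ Metric.infDist p (L : Set E) := by
    rw [Metric.le_infDist hne]
    intro y hy
    rw [dist_eq_norm]
    exact (hcon y hy).le
  set m := ⌊D⌋₊ with hm
  have hmD : (m : ℝ) ≤ D := Nat.floor_le hD0
  have hex : ∀ k : Fin (m + 1), ∃ t : ℝ, Metric.infDist (t • p) (L : Set E) = (k : ℕ) := by
    intro k
    have hc : Continuous fun t : ℝ => Metric.infDist (t • p) (L : Set E) :=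
      (Metric.continuous_infDist_pt _).comp (continuous_id.smul continuous_const)
    have := intermediate_value_Icc (zero_le_one' ℝ) hc.continuousOn
    have hk : ((k : ℕ) : ℝ) ≤ m := by exact_mod_cast Nat.lt_succ_iff.mp k.2
    obtain ⟨t, -, ht⟩ := this (show ((k : ℕ) : ℝ) ∈ _ from by
      constructor
      · have : Metric.infDist ((0 : ℝ) • p) (L : Set E) = 0 := by
          rw [zero_smul]; exact Metric.infDist_zero_of_mem L.zero_mem
        simp only [this]; positivity
      · simp only [one_smul]; linarith)
    exact ⟨t, ht⟩
  choose t ht using hex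
  -- key separation
  have key : ∀ (j k : Fin (m + 1)) (v : E), v ∈ L → ‖v + t j • p - t k • p‖ < 1 →
      j = k ∧ v = 0 := by
    intro j k v hv hlt
    have hinv : ∀ q : E, Metric.infDist (v + q) (L : Set E) ≤ Metric.infDist q (L : Set E) := by
      intro q
      rw [Metric.le_infDist hne]
      intro y hy
      have := Metric.infDist_le_dist_of_mem (x := v + q) (L.add_mem hv hy)
      simpa using this
    have hle : ∀ q : E, Metric.infDist q (L : Set E) ≤ Metric.infDist (v + q) (L : Set E) := by
      intro q
      rw [Metric.le_infDist hne]
      intro y hy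
      have := Metric.infDist_le_dist_of_mem (x := q) (L.sub_mem hy hv)
      refine this.trans (le_of_eq ?_)
      rw [dist_eq_norm, dist_eq_norm]
      congr 1; abel
    have heq : Metric.infDist (v + t j • p) (L : Set E) = (j : ℕ) := by
      rw [← ht j]; exact le_antisymm (hinv _) (hle _)
    have h1 : ((j : ℕ) : ℝ) < (k : ℕ) + 1 := by
      have := Metric.infDist_le_infDist_add_dist (s := (L : Set E)) (x := v + t j • p)
        (y := t k • p)
      rw [heq, ht k, dist_eq_norm] at this
      linarith
    have h2 : ((k : ℕ) : ℝ) < (j : ℕ) + 1 := by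
      have := Metric.infDist_le_infDist_add_dist (s := (L : Set E)) (x := t k • p)
        (y := v + t j • p)
      rw [heq, ht k, dist_comm, dist_eq_norm] at this
      linarith
    have hjk : j = k := by
      have h1' : (j : ℕ) < (k : ℕ) + 1 := by exact_mod_cast h1
      have h2' : (k : ℕ) < (j : ℕ) + 1 := by exact_mod_cast h2
      ext; omega
    refine ⟨hjk, ?_⟩
    subst hjk
    by_contra hv0
    have := hmin v hv hv0
    rw [add_sub_cancel_right] at hlt
    linarith
  let S : Set E := ⋃ k : Fin (m + 1), Metric.ball (t k • p) (1 / 2)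
  have hS : μ F < μ S := by
    have hdisj : Pairwise (Function.onFun Disjoint
        fun k : Fin (m + 1) => Metric.ball (t k • p) (1 / 2)) := by
      intro j k hjk
      rw [Function.onFun, Set.disjoint_left]
      intro x hx hx'
      apply hjk
      refine (key j k 0 L.zero_mem ?_).1
      rw [zero_add, ← dist_eq_norm]
      rw [Metric.mem_ball] at hx hx'
      have := dist_triangle_left (t j • p) (t k • p) x
      linarith
    rw [measure_iUnion hdisj (fun _ => measurableSet_ball), tsum_fintype]
    have : ∀ k : Fin (m + 1), 1 ≤ μ (Metric.ball (t k • p) (1 / 2)) := by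
      intro k; rwa [Measure.addHaar_ball_center]
    calc μ F = ENNReal.ofReal D := hF
      _ < ((m + 1 : ℕ) : ENNReal) := by
        rw [ENNReal.ofReal_lt_natCast (by simp)]
        exact_mod_cast Nat.lt_floor_add_one D
      _ = ∑ k : Fin (m + 1), (1 : ENNReal) := by simp
      _ ≤ _ := Finset.sum_le_sum fun k _ => this k
  have fund' : IsAddFundamentalDomain L.toAddSubgroup F μ := fund
  have hcnt : Countable L.toAddSubgroup := ‹Countable L›
  obtain ⟨x, y, hxy, h⟩ := exists_pair_mem_lattice_not_disjoint_vadd fund'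
    (MeasurableSet.iUnion fun k : Fin (m + 1) =>
      (measurableSet_ball : MeasurableSet (Metric.ball (t k • p) (1 / 2)))).nullMeasurableSet hS
  obtain ⟨_, ⟨v, hv, rfl⟩, w, hw, hvw⟩ := Set.not_disjoint_iff.mp h
  obtain ⟨j, hj⟩ := Set.mem_iUnion.mp hv
  obtain ⟨k, hk⟩ := Set.mem_iUnion.mp hw
  have hvw' : (y : E) + w = x + v := hvw
  have := (key j k ((x : E) - y) (L.sub_mem x.2 y.2) ?_).2
  · exact hxy (Subtype.ext (sub_eq_zero.mp this))
  · rw [mem_ball_iff_norm] at hj hk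
    have e : (x : E) - y + t j • p - t k • p = (w - t k • p) - (v - t j • p) := by
      have : (x : E) = y + w - v := by rw [hvw']; abel
      rw [this]; abel
    rw [e]
    have := norm_sub_le (w - t k • p) (v - t j • p)
    linarith

open NumberField.InfinitePlace NumberField.mixedEmbedding MeasureTheory

lemma exists_real_place {K : Type*} [Field K] [NumberField K] (s : K →+* ℝ) :
    ∃ w : {w : InfinitePlace K // IsReal w}, embedding_of_isReal w.2 = s := by
  have hr : ComplexEmbedding.IsReal ((algebraMap ℝ ℂ).comp s) := by
    rw [ComplexEmbedding.isReal_iff]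
    ext x
    simp [ComplexEmbedding.conjugate_coe_eq]
  refine ⟨⟨InfinitePlace.mk ((algebraMap ℝ ℂ).comp s), isReal_mk_iff.mpr hr⟩, ?_⟩
  ext x
  have := embedding_of_isReal_apply (isReal_mk_iff.mpr hr) x
  rw [embedding_mk_eq_of_isReal hr] at this
  exact Complex.ofReal_injective this

lemma exists_one_le_place {K : Type*} [Field K] [NumberField K] {a : 𝓞 K} (ha : a ≠ 0) :
    ∃ w : InfinitePlace K, 1 ≤ w (a : K) := by
  by_contra! h
  obtain ⟨w⟩ : Nonempty (InfinitePlace K) := inferInstance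
  exact absurd (one_le_of_lt_one (w := w) ha fun z _ => h z) (not_le.mpr (h w))

open scoped Classical in
lemma sup_bound (K : Type*) [Field K] [NumberField K] (hc : nrComplexPlaces K = 0)
    (I : Ideal (𝓞 K)) (hI : I ≠ ⊥) (p : mixedSpace K) :
    ∃ α ∈ I, ‖p - mixedEmbedding K (α : K)‖ ≤
      (Ideal.absNorm I : ℝ) * Real.sqrt |(discr K : ℝ)| := by
  let J : (FractionalIdeal (nonZeroDivisors (𝓞 K)) K)ˣ :=
    Units.mk0 (I : FractionalIdeal (nonZeroDivisors (𝓞 K)) K)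
      (FractionalIdeal.coeIdeal_ne_zero.mpr hI)
  have hJ : ∀ x ∈ idealLattice K J, ∃ α ∈ I, mixedEmbedding K (α : K) = x := by
    intro x hx
    obtain ⟨y, hy, rfl⟩ := (mem_idealLattice K J).mp hx
    have hy' : y ∈ (I : FractionalIdeal (nonZeroDivisors (𝓞 K)) K) := hy
    obtain ⟨α, hα, rfl⟩ := (FractionalIdeal.mem_coeIdeal _).mp hy'
    exact ⟨α, hα, rfl⟩
  have hemp : IsEmpty {w : InfinitePlace K // IsComplex w} := by
    rw [← Fintype.card_eq_zero_iff]; exact hc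
  have hreal : ∀ w : InfinitePlace K, IsReal w := fun w =>
    not_isComplex_iff_isReal.mp fun h => hemp.false ⟨w, h⟩
  have hcount : Countable (idealLattice K J) := inferInstance
  have hfund := fundamentalDomain_idealLattice K J
  have hcov := covolume_idealLattice K J
  rw [ZLattice.covolume_eq_measure_fundamentalDomain _ _ hfund, hc, pow_zero, mul_one,
    measureReal_def] at hcov
  have hN : (FractionalIdeal.absNorm (J : FractionalIdeal (nonZeroDivisors (𝓞 K)) K) : ℝ)
      = (Ideal.absNorm I : ℝ) := by
    simp [J, FractionalIdeal.coeIdeal_absNorm]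
  rw [hN] at hcov
  obtain ⟨x, hx, hxD⟩ := covering_of_min volume (idealLattice K J) _
    ((Ideal.absNorm I : ℝ) * Real.sqrt |(discr K : ℝ)|) (by positivity) hfund
    (by
      rw [← ENNReal.ofReal_toReal (a := volume _), hcov]
      exact (ZSpan.fundamentalDomain_isBounded _).measure_lt_top.ne)
    (by
      intro x hx hx0
      obtain ⟨α, hα, rfl⟩ := hJ x hx
      have hα0 : α ≠ 0 := by rintro rfl; simp at hx0
      obtain ⟨w, hw⟩ := exists_one_le_place hα0
      rw [← norm_embedding_of_isReal (hreal w)] at hw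
      refine hw.trans ?_
      refine le_trans ?_ (norm_fst_le (mixedEmbedding K (α : K)))
      exact norm_le_pi_norm (mixedEmbedding K (α : K)).1 ⟨w, hreal w⟩)
    (by
      have h1 : convexBodyLT K (fun _ => 1 / 2) ⊆ Metric.ball 0 (1 / 2) := by
        intro x hx
        rw [mem_ball_zero_iff, Prod.norm_def, max_lt_iff, pi_norm_lt_iff (by norm_num),
          pi_norm_lt_iff (by norm_num)]
        obtain ⟨h1, h2⟩ := hx
        exact ⟨fun w => by simpa using h1 w trivial, fun w => (hemp.false w).elim⟩
      refine le_trans (le_of_eq ?_) (measure_mono h1)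
      rw [convexBodyLT_volume, convexBodyLTFactor, hc]
      have : ∏ w : InfinitePlace K, (1 / 2 : NNReal) ^ mult w
          = (1 / 2 : NNReal) ^ nrRealPlaces K := by
        rw [Finset.prod_pow_eq_pow_sum, sum_mult_eq, ← card_add_two_mul_card_eq_rank, hc]
        simp
      rw [this, ← ENNReal.coe_mul, pow_zero, mul_one, ← mul_pow]
      norm_num)
    p
  obtain ⟨α, hα, rfl⟩ := hJ x hx
  exact ⟨α, hα, hxD⟩

theorem covering_aux (K : Type*) [Field K] [NumberField K]
    (d : ℕ) (hd : d = Module.finrank ℚ K)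
    (σ : Fin d → (K →+* ℝ)) (hσ : Function.Injective σ)
    (I : Ideal (𝓞 K)) (hI : I ≠ ⊥) :
    ∀ p : Fin d → ℝ, ∃ α ∈ I,
      Real.sqrt (∑ i, (p i - σ i (α : K)) ^ 2) ≤
        (d : ℝ) ^ ((3 : ℝ) / 2) / 2 *
          ((Ideal.absNorm I : ℝ) * Real.sqrt |(discr K : ℝ)|) := by
  classical
  intro p
  have hdpos : 0 < d := hd ▸ Module.finrank_pos
  set B := (Ideal.absNorm I : ℝ) * Real.sqrt |(discr K : ℝ)| with hB
  have hB0 : 0 ≤ B := by positivity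
  have hd0 : (0 : ℝ) < d := by exact_mod_cast hdpos
  have hpow : (d : ℝ) ^ ((3 : ℝ) / 2) = d * Real.sqrt d := by
    rw [show (3 : ℝ) / 2 = 1 + 1 / 2 by norm_num, Real.rpow_add hd0, Real.rpow_one,
      Real.sqrt_eq_rpow]
  -- a uniform coordinate bound suffices
  have huni : ∀ (α : 𝓞 K) (C : ℝ), 0 ≤ C → (∀ i, |p i - σ i (α : K)| ≤ C) →
      Real.sqrt (∑ i, (p i - σ i (α : K)) ^ 2) ≤ Real.sqrt d * C := by
    intro α C hC h
    rw [Real.sqrt_le_left (by positivity), mul_pow, Real.sq_sqrt hd0.le]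
    calc _ ≤ ∑ i : Fin d, C ^ 2 := Finset.sum_le_sum fun i _ => by
            rw [← sq_abs]; exact pow_le_pow_left₀ (abs_nonneg _) (h i) 2
      _ = _ := by simp
  rcases Nat.lt_or_ge 1 d with h2 | h1
  · choose w hw using fun i => exists_real_place (σ i)
    have hinj : Function.Injective w := by
      intro i j hij
      apply hσ
      rw [← hw i, ← hw j, hij]
    have hcard : d ≤ nrRealPlaces K := by
      have := Fintype.card_le_of_injective w hinj
      rwa [Fintype.card_fin] at this
    have hrank := card_add_two_mul_card_eq_rank K
    have hc : nrComplexPlaces K = 0 := by omega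
    obtain ⟨α, hα, hle⟩ := sup_bound K hc I hI
      (fun v => if h : ∃ i, w i = v then p h.choose else 0, 0)
    refine ⟨α, hα, (huni α B hB0 fun i => ?_).trans ?_⟩
    · have h1 := (norm_fst_le _).trans hle
      have h2 := (norm_le_pi_norm _ (w i)).trans h1
      have hex : ∃ j, w j = w i := ⟨i, rfl⟩
      have hch : hex.choose = i := hinj hex.choose_spec
      have e : (mixedEmbedding K (α : K)).1 (w i) = σ i (α : K) := by
        rw [← hw i]; rfl
      simpa [e, hch] using h2
    · rw [hpow]
      have h2' : (2 : ℝ) ≤ d := by exact_mod_cast h2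
      have : 0 ≤ Real.sqrt d * B := by positivity
      nlinarith
  · have hd1 : d = 1 := by omega
    let i0 : Fin d := ⟨0, hdpos⟩
    have hall : ∀ i : Fin d, i = i0 := fun i => by ext; have := i.2; simp [i0]; omega
    set N := Ideal.absNorm I with hN
    have hN0 : (0 : ℝ) < N := by
      have : N ≠ 0 := by rw [hN, Ne, Ideal.absNorm_eq_zero_iff]; exact hI
      exact_mod_cast Nat.pos_of_ne_zero this
    refine ⟨(round (p i0 / N) : 𝓞 K) * (N : 𝓞 K), I.mul_mem_left _ (Ideal.absNorm_mem I), ?_⟩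
    refine (huni _ (B / 2) (by positivity) fun i => ?_).trans ?_
    · rw [hall i]
      have e : σ i0 (((round (p i0 / N) : 𝓞 K) * (N : 𝓞 K) : 𝓞 K) : K)
          = round (p i0 / N) * N := by simp
      rw [e]
      have hr := abs_sub_round (p i0 / N)
      have e2 : p i0 - round (p i0 / N) * N = (p i0 / N - round (p i0 / N)) * N := by
        field_simp
      rw [e2, abs_mul, abs_of_pos hN0]
      have hdisc : (1 : ℝ) ≤ Real.sqrt |(discr K : ℝ)| := by
        rw [Real.one_le_sqrt]
        exact_mod_cast Int.one_le_abs (discr_ne_zero K)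
      rw [hB]
      nlinarith [mul_le_mul_of_nonneg_right hr hN0.le]
    · rw [hpow, hd1]; simp; linarith

/-- Let `K` be a totally real number field of degree `d` with real embeddings
`σ_1,…,σ_d`, `I ⊆ 𝒪_K` a nonzero ideal and `L_I = Σ(I) ⊂ ℝ^d` its image under the
Minkowski embedding `Σ = (σ_1,…,σ_d)`. Then the Euclidean covering radius of `L_I`
satisfies `μ(L_I) ≤ (d^{3/2}/2)·N_K(I)·√|Δ_K|`: every point of `ℝ^d` is within that
distance of a point of `L_I`. -/
theorem ideal_lattice_covering_radius (K : Type*) [Field K] [NumberField K]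
    (σ : Fin (Module.finrank ℚ K) → (K →+* ℝ)) (hσ : Function.Injective σ)
    (I : Ideal (𝓞 K)) (hI : I ≠ ⊥) :
    ∀ p : Fin (Module.finrank ℚ K) → ℝ, ∃ α ∈ I,
      Real.sqrt (∑ i, (p i - σ i (α : K)) ^ 2) ≤
        (Module.finrank ℚ K : ℝ) ^ ((3 : ℝ) / 2) / 2 *
          ((Ideal.absNorm I : ℝ) * Real.sqrt |(discr K : ℝ)|) := by
  exact covering_aux K _ rfl σ hσ I hI
end

section
/- Let K be a totally real number field of degree d and I ⊆ O_K a nonzero ideal. Then there exist Q-linearly independent totally nonnegative elements α_1,...,α_d ∈ I⁺ such that ∏_{i=1}^d h(α_i) ≤ (3d√d)^d · (N_K(I)·√|Δ_K|)^{d+1}. -/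
open NumberField

open NumberField NumberField.InfinitePlace

lemma absNorm_denominatorIdeal_int {K : Type*} [Field K] [NumberField K] (a : 𝓞 K) :
    Ideal.absNorm (denominatorIdeal (a : K)) = 1 := by
  rw [Ideal.absNorm_eq_one_iff, Ideal.eq_top_iff_one]
  change IsIntegral ℤ (((1 : 𝓞 K) : K) * (a : K))
  simpa using RingOfIntegers.isIntegral_coe a

/-- The infinite place of a real embedding. -/
noncomputable def realPlace {K : Type*} [Field K] (s : K →+* ℝ) : InfinitePlace K :=
  InfinitePlace.mk (Complex.ofRealHom.comp s)

lemma realPlace_apply {K : Type*} [Field K] (s : K →+* ℝ) (x : K) :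
    realPlace s x = |s x| := by
  simp [realPlace, InfinitePlace.apply]

lemma isReal_comp {K : Type*} [Field K] (s : K →+* ℝ) :
    ComplexEmbedding.IsReal (Complex.ofRealHom.comp s) := by
  rw [ComplexEmbedding.isReal_iff]
  ext x
  simp [ComplexEmbedding.conjugate_coe_eq]

lemma isReal_realPlace {K : Type*} [Field K] (s : K →+* ℝ) : (realPlace s).IsReal :=
  ⟨_, isReal_comp s, rfl⟩

lemma realPlace_injective {K : Type*} [Field K] :
    Function.Injective (realPlace : (K →+* ℝ) → InfinitePlace K) := by
  intro s t h
  have h2 : Complex.ofRealHom.comp s = Complex.ofRealHom.comp t := by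
    rcases mk_eq_iff.mp h with h | h
    · exact h
    · rwa [ComplexEmbedding.isReal_iff.mp (isReal_comp s)] at h
  ext x
  have := RingHom.congr_fun h2 x
  simpa using this

lemma exists_small {K : Type*} [Field K] [NumberField K]
    (σ : Fin (Module.finrank ℚ K) → (K →+* ℝ)) (hσ : Function.Injective σ)
    (w₀ : InfinitePlace K) (hw₀ : w₀.IsReal) :
    ∃ a : 𝓞 K, a ≠ 0 ∧ (∀ w, w ≠ w₀ → w a < 1) ∧
      w₀ a < 2 * Real.sqrt |(discr K : ℝ)| := by
  classical
  have hr2 : nrComplexPlaces K = 0 := by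
    have h1 : Module.finrank ℚ K ≤ nrRealPlaces K := by
      have := Fintype.card_le_of_injective
        (fun i => (⟨realPlace (σ i), isReal_realPlace _⟩ : {w : InfinitePlace K // IsReal w}))
        (fun i j h => hσ (realPlace_injective (Subtype.ext_iff.mp h)))
      simpa using this
    have := card_add_two_mul_card_eq_rank K
    omega
  have hr1 : nrRealPlaces K = Module.finrank ℚ K := by
    have := card_add_two_mul_card_eq_rank K
    omega
  set s : NNReal := NNReal.sqrt ‖discr K‖₊ with hs
  have hs0 : 0 < s := by
    rw [hs, NNReal.sqrt_pos]
    simpa [pos_iff_ne_zero] using discr_ne_zero K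
  have hB : mixedEmbedding.minkowskiBound K ↑1 <
      mixedEmbedding.convexBodyLTFactor K * ((2 * s : NNReal) : ENNReal) := by
    rw [mixedEmbedding.minkowskiBound,
      mixedEmbedding.volume_fundamentalDomain_fractionalIdealLatticeBasis, Units.val_one,
      FractionalIdeal.absNorm_one, Rat.cast_one, ENNReal.ofReal_one, one_mul,
      mixedEmbedding.finrank, mixedEmbedding.volume_fundamentalDomain_latticeBasis,
      mixedEmbedding.convexBodyLTFactor, hr2, hr1, ← hs]
    simp only [pow_zero, one_mul, mul_one]
    rw [mul_comm]
    norm_cast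
    gcongr
    exact lt_two_mul_self hs0
  have : mixedEmbedding.minkowskiBound K ↑1 < MeasureTheory.volume
      (mixedEmbedding.convexBodyLT K (fun w ↦ if w = w₀ then (2 * s) else 1)) := by
    rw [mixedEmbedding.convexBodyLT_volume, ← Finset.prod_erase_mul _ _ (Finset.mem_univ w₀)]
    simp_rw [ite_pow, one_pow]
    rw [Finset.prod_ite_eq']
    simp_rw [Finset.notMem_erase, ite_false, mult, hw₀, ite_true, one_mul, pow_one]
    exact hB
  obtain ⟨a, h_nz, h_le⟩ := mixedEmbedding.exists_ne_zero_mem_ringOfIntegers_lt K this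
  refine ⟨a, h_nz, fun w hw => ?_, ?_⟩
  · simpa [hw] using h_le w
  · have := h_le w₀
    simpa [hs, Int.norm_eq_abs] using this

lemma numeric_bound (d : ℕ) (hd : 0 < d) (N S : ℝ) (hN : 1 ≤ N) (hS : 1 ≤ S) :
    ∏ k : Fin d, (N ^ d * (2 * S) ^ (2 * (k : ℕ))) ^ ((d : ℝ)⁻¹) ≤
      (3 * (d : ℝ) * Real.sqrt d) ^ d * (N * S) ^ (d + 1) := by
  have hd' : (1 : ℝ) ≤ d := by exact_mod_cast hd
  rw [Real.finsetProd_rpow _ _ (fun i _ => by positivity)]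
  have e : ∏ k : Fin d, (N ^ d * (2 * S) ^ (2 * (k : ℕ))) = (N ^ d * (2 * S) ^ (d - 1)) ^ d := by
    rw [Finset.prod_mul_distrib, Finset.prod_pow_eq_pow_sum, Finset.prod_pow_eq_pow_sum, mul_pow (N ^ d), ← pow_mul (2 * S),
      Fin.sum_univ_eq_sum_range (fun k => 2 * k), ← Finset.mul_sum, mul_comm 2 (Finset.sum _ _),
      Finset.sum_range_id_mul_two, mul_comm d (d - 1)]
    simp [← pow_mul]
  rw [e, Real.pow_rpow_inv_natCast (by positivity) hd.ne']
  have h2 : (2 : ℝ) ^ (d - 1) ≤ (3 * (d : ℝ) * Real.sqrt d) ^ d := by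
    have hs : (1 : ℝ) ≤ Real.sqrt d := Real.one_le_sqrt.mpr hd'
    have : (2 : ℝ) ≤ 3 * (d : ℝ) * Real.sqrt d := by nlinarith
    calc (2 : ℝ) ^ (d - 1) ≤ 2 ^ d := pow_le_pow_right₀ (by norm_num) (Nat.sub_le _ _)
      _ ≤ _ := by gcongr
  have h3 : S ^ (d - 1) ≤ S ^ (d + 1) := pow_le_pow_right₀ hS (by omega)
  have h4 : N ^ d ≤ N ^ (d + 1) := pow_le_pow_right₀ hN (by omega)
  calc N ^ d * (2 * S) ^ (d - 1) = 2 ^ (d - 1) * (N ^ d * S ^ (d - 1)) := by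
        rw [mul_pow]; ring
    _ ≤ (3 * (d : ℝ) * Real.sqrt d) ^ d * (N ^ (d + 1) * S ^ (d + 1)) := by gcongr
    _ = _ := by rw [mul_pow N S]

lemma height_bound {K : Type*} [Field K] [NumberField K]
    (σ : Fin (Module.finrank ℚ K) → (K →+* ℝ)) (i₀ : Fin (Module.finrank ℚ K))
    (N : ℕ) (hN : 1 ≤ N) (B : ℝ) (hB : 1 ≤ B) (θ : 𝓞 K)
    (h1 : ∀ i, i ≠ i₀ → |σ i θ| ≤ 1) (h2 : |σ i₀ θ| ≤ B) (k : ℕ) :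
    weilHeight σ (((N : 𝓞 K) * (θ ^ 2) ^ k : 𝓞 K) : K) ≤
      ((N : ℝ) ^ Module.finrank ℚ K * B ^ (2 * k)) ^ ((Module.finrank ℚ K : ℝ)⁻¹) := by
  have hN' : (1 : ℝ) ≤ N := by exact_mod_cast hN
  rw [weilHeight, absNorm_denominatorIdeal_int]
  refine Real.rpow_le_rpow (by positivity) ?_ (by positivity)
  rw [Nat.cast_one, one_mul]
  have key : ∀ i, max 1 |σ i (((N : 𝓞 K) * (θ ^ 2) ^ k : 𝓞 K) : K)| ≤
      (N : ℝ) * (if i = i₀ then B ^ (2 * k) else 1) := by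
    intro i
    have e : |σ i (((N : 𝓞 K) * (θ ^ 2) ^ k : 𝓞 K) : K)| = N * |σ i θ| ^ (2 * k) := by
      simp [abs_mul, abs_pow, ← pow_mul]
    rw [e]
    split_ifs with h
    · subst h
      refine max_le (one_le_mul_of_one_le_of_one_le hN' (one_le_pow₀ hB)) ?_
      gcongr
    · rw [mul_one]
      refine max_le hN' ?_
      exact mul_le_of_le_one_right (by positivity) (pow_le_one₀ (abs_nonneg _) (h1 i h))
  calc _ ≤ ∏ i, ((N : ℝ) * (if i = i₀ then B ^ (2 * k) else 1)) :=
        Finset.prod_le_prod (fun i _ => by positivity) (fun i _ => key i)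
    _ = _ := by
        rw [Finset.prod_mul_distrib]
        simp

/-- Let `K` be a totally real number field of degree `d` with real embeddings
`σ_1,…,σ_d` and `I ⊆ 𝒪_K` a nonzero ideal. Then there exist `ℚ`-linearly independent
totally nonnegative elements `α_1,…,α_d ∈ I⁺` with
`∏_i h(α_i) ≤ (3d√d)^d · (N_K(I)·√|Δ_K|)^{d+1}`. -/
theorem positive_successive_minima_height (K : Type*) [Field K] [NumberField K]
    (σ : Fin (Module.finrank ℚ K) → (K →+* ℝ)) (hσ : Function.Injective σ)
    (I : Ideal (𝓞 K)) (hI : I ≠ ⊥) :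
    ∃ α : Fin (Module.finrank ℚ K) → 𝓞 K,
      (∀ i, α i ∈ I) ∧ (∀ i j, 0 ≤ σ j (α i : K)) ∧
      LinearIndependent ℚ (fun i => (α i : K)) ∧
      ∏ i, weilHeight σ (α i : K) ≤
        (3 * (Module.finrank ℚ K : ℝ) * Real.sqrt (Module.finrank ℚ K)) ^
            (Module.finrank ℚ K) *
          ((Ideal.absNorm I : ℝ) * Real.sqrt |(discr K : ℝ)|) ^
            (Module.finrank ℚ K + 1) := by
  have hd : 0 < Module.finrank ℚ K := Module.finrank_pos
  let i₀ : Fin (Module.finrank ℚ K) := ⟨0, hd⟩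
  obtain ⟨θ, hθ0, hθ1, hθ2⟩ := exists_small σ hσ (realPlace (σ i₀)) (isReal_realPlace _)
  have hN : 1 ≤ Ideal.absNorm I :=
    Nat.one_le_iff_ne_zero.mpr (fun h => hI (Ideal.absNorm_eq_zero_iff.mp h))
  have hN' : (1 : ℝ) ≤ Ideal.absNorm I := by exact_mod_cast hN
  set S : ℝ := Real.sqrt |(discr K : ℝ)| with hS
  have hS1 : 1 ≤ S := by
    rw [hS, Real.one_le_sqrt]
    exact_mod_cast Int.one_le_abs (discr_ne_zero K)
  have hprim : IntermediateField.adjoin ℚ {((θ ^ 2 : 𝓞 K) : K)} = ⊤ := by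
    refine is_primitive_element_of_infinitePlace_lt (w := realPlace (σ i₀)) (pow_ne_zero 2 hθ0)
      (fun w hw => ?_) (Or.inl (isReal_realPlace _))
    have := hθ1 w hw
    simpa using pow_lt_one₀ (apply_nonneg w _) this two_ne_zero
  rw [Field.primitive_element_iff_minpoly_natDegree_eq] at hprim
  have hli : LinearIndependent ℚ
      (fun i : Fin (Module.finrank ℚ K) => ((θ ^ 2 : 𝓞 K) : K) ^ (i : ℕ)) := by
    have := linearIndependent_pow (K := ℚ) ((θ ^ 2 : 𝓞 K) : K)
    rwa [hprim] at this
  refine ⟨fun k => (Ideal.absNorm I : 𝓞 K) * (θ ^ 2) ^ (k : ℕ), fun k => ?_, fun k j => ?_, ?_, ?_⟩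
  · exact I.mul_mem_right _ (Ideal.absNorm_mem I)
  · have : σ j (((Ideal.absNorm I : 𝓞 K) * (θ ^ 2) ^ (k : ℕ) : 𝓞 K) : K) =
        Ideal.absNorm I * ((σ j θ) ^ 2) ^ (k : ℕ) := by simp
    rw [this]
    positivity
  · have hu := hli.units_smul (fun _ => Units.mk0 (Ideal.absNorm I : ℚ) (by
      exact_mod_cast (Nat.one_le_iff_ne_zero.mp hN)))
    convert hu using 1
    ext k
    simp [Units.smul_def, Algebra.smul_def]
  · have hb : ∀ k : Fin (Module.finrank ℚ K), _ := fun k =>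
      height_bound σ i₀ (Ideal.absNorm I) hN (2 * S) (by linarith) θ
        (fun i hi => by
          rw [← realPlace_apply]
          exact (hθ1 _ (fun h => hi (hσ (realPlace_injective h)))).le)
        (by rw [← realPlace_apply]; exact hθ2.le) k
    exact (Finset.prod_le_prod (fun k _ => Real.rpow_nonneg (by positivity) _)
      (fun k _ => hb k)).trans (numeric_bound _ hd _ _ hN' hS1)
end
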